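/- Let Z ⊆ Σ₂ be a nonempty compact σ-invariant set, z ∈ Z with dense σ-orbit in Z, and suppose φ ∈ ℓ∞(ℤ₂×ℤ) and δ > 0 satisfy φ(z_i, i) ≥ φ(1−z_i, i) + δ for all i ∈ ℤ. Then for every ergodic σ-invariant measure μ, Λ(φ, μ) ≤ log ϱ(L₀^φ, L₁^φ) − δ · inf{ d̄(μ, ν) : ν ∈ M_σ, ν(Z) = 1 }. -/

import Mathlib

open MeasureTheory Filter

noncomputable section

/-- The full two-sided shift space on two symbols. -/
abbrev Sig := ℤ → Bool

/-- The two-sided shift map. -/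
def shift : Sig → Sig := fun x i => x (i + 1)

/-- `birk φ n x = sup_{k ∈ ℤ} Σ_{i=0}^{n-1} φ(x_i, i+k)`, which equals
`log ‖L^φ_{x_{n-1}} ⋯ L^φ_{x_0}‖` for the associated weighted shift operators. -/
def birk (φ : Bool → ℤ → ℝ) (n : ℕ) (x : Sig) : ℝ :=
  ⨆ k : ℤ, ∑ i ∈ Finset.range n, φ (x (i : ℤ)) ((i : ℤ) + k)

/-- The top Lyapunov exponent `Λ(φ,μ) = inf_{n ≥ 1} (1/n) ∫ birk φ n dμ`
(the limit exists and equals this infimum by subadditivity). -/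
def Lam (φ : Bool → ℤ → ℝ) (μ : Measure Sig) : ℝ :=
  ⨅ n : ℕ, ((n : ℝ) + 1)⁻¹ * ∫ x, birk φ (n + 1) x ∂μ

/-- `log ϱ(L₀^φ, L₁^φ) = inf_{n ≥ 1} (1/n) sup_{x} birk φ n x`. -/
def logSpr (φ : Bool → ℤ → ℝ) : ℝ :=
  ⨅ n : ℕ, ((n : ℝ) + 1)⁻¹ * ⨆ x : Sig, birk φ (n + 1) x

/-- The Ornstein `d̄`-metric: `d̄(μ,ν)` is the infimum over `(σ×σ)`-invariant joinings `m`
of `μ` and `ν` of `m {(x,y) : x₀ ≠ y₀}`. -/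
def dbar (μ ν : Measure Sig) : ℝ :=
  sInf {r : ℝ | ∃ m : Measure (Sig × Sig),
    IsProbabilityMeasure m ∧ m.map (Prod.map shift shift) = m ∧
    m.map Prod.fst = μ ∧ m.map Prod.snd = ν ∧
    r = (m {p : Sig × Sig | p.1 0 ≠ p.2 0}).toReal}


section aux

open scoped ENNReal Topology

lemma sum_abs_le {φ : Bool → ℤ → ℝ} {C : ℝ} (hC : ∀ a i, |φ a i| ≤ C) (n : ℕ) (x : Sig) (k : ℤ) :
    |∑ i ∈ Finset.range n, φ (x (i : ℤ)) ((i : ℤ) + k)| ≤ n * C := by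
  refine (Finset.abs_sum_le_sum_abs _ _).trans ?_
  refine (Finset.sum_le_sum fun i _ => hC _ _).trans ?_
  simp

lemma birk_bdd {φ : Bool → ℤ → ℝ} {C : ℝ} (hC : ∀ a i, |φ a i| ≤ C) (n : ℕ) (x : Sig) :
    BddAbove (Set.range fun k : ℤ => ∑ i ∈ Finset.range n, φ (x (i : ℤ)) ((i : ℤ) + k)) := by
  refine ⟨n * C, ?_⟩
  rintro _ ⟨k, rfl⟩
  exact (abs_le.1 (sum_abs_le hC n x k)).2

lemma birk_abs_le {φ : Bool → ℤ → ℝ} {C : ℝ} (hC : ∀ a i, |φ a i| ≤ C) (n : ℕ) (x : Sig) :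
    |birk φ n x| ≤ n * C := by
  rw [abs_le]
  constructor
  · exact (abs_le.1 (sum_abs_le hC n x 0)).1.trans (le_ciSup (birk_bdd hC n x) 0)
  · exact ciSup_le fun k => (abs_le.1 (sum_abs_le hC n x k)).2

lemma supbirk_bdd {φ : Bool → ℤ → ℝ} {C : ℝ} (hC : ∀ a i, |φ a i| ≤ C) (n : ℕ) :
    BddAbove (Set.range fun x : Sig => birk φ n x) := by
  refine ⟨n * C, ?_⟩
  rintro _ ⟨x, rfl⟩
  exact (abs_le.1 (birk_abs_le hC n x)).2

lemma birk_add_le {φ : Bool → ℤ → ℝ} {C : ℝ} (hC : ∀ a i, |φ a i| ≤ C) (m n : ℕ) (x : Sig) :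
    birk φ (m + n) x ≤ birk φ m x + birk φ n (fun j => x (j + m)) := by
  refine ciSup_le fun k => ?_
  rw [Finset.sum_range_add]
  refine add_le_add (le_ciSup (birk_bdd hC m x) k) ?_
  refine le_trans (le_of_eq ?_) (le_ciSup (birk_bdd hC n (fun j => x (j + m))) (m + k))
  refine Finset.sum_congr rfl fun i _ => ?_
  push_cast
  rw [add_comm (m : ℤ) i, add_assoc]

lemma supbirk_subadd {φ : Bool → ℤ → ℝ} {C : ℝ} (hC : ∀ a i, |φ a i| ≤ C) :
    Subadditive (fun n => ⨆ x : Sig, birk φ n x) := by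
  intro m n
  refine ciSup_le fun x => (birk_add_le hC m n x).trans ?_
  exact add_le_add (le_ciSup (supbirk_bdd hC m) x) (le_ciSup (supbirk_bdd hC n) _)

lemma supbirk_tendsto {φ : Bool → ℤ → ℝ} {C : ℝ} (hC : ∀ a i, |φ a i| ≤ C) :
    ∃ l ≤ logSpr φ, Tendsto (fun n : ℕ => (⨆ x : Sig, birk φ n x) / n) atTop (𝓝 l) := by
  have hC0 : 0 ≤ C := (abs_nonneg _).trans (hC true 0)
  have hb : BddBelow (Set.range fun n : ℕ => (⨆ x : Sig, birk φ n x) / n) := by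
    refine ⟨-C, ?_⟩
    rintro _ ⟨n, rfl⟩
    rcases Nat.eq_zero_or_pos n with rfl | hn
    · simpa using hC0
    · have hn' : (0 : ℝ) < n := by exact_mod_cast hn
      simp only
      rw [le_div_iff₀ hn']
      have h1 := (abs_le.1 (birk_abs_le hC n (fun _ => true))).1
      have h2 := le_ciSup (supbirk_bdd hC n) (fun _ => true)
      linarith
  refine ⟨(supbirk_subadd hC).lim, ?_, (supbirk_subadd hC).tendsto_lim hb⟩
  refine le_ciInf fun n => ?_
  refine ((supbirk_subadd hC).lim_le_div hb (Nat.succ_ne_zero n)).trans (le_of_eq ?_)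
  simp only [Nat.succ_eq_add_one]
  push_cast
  rw [div_eq_inv_mul]

lemma birk_meas (φ : Bool → ℤ → ℝ) (n : ℕ) : Measurable (birk φ n) := by
  unfold birk
  refine Measurable.iSup fun k => Finset.measurable_sum _ fun i _ => ?_
  exact (Measurable.of_discrete (f := fun b : Bool => φ b ((i : ℤ) + k))).comp
    (measurable_pi_apply _)

/-- Hamming distance between `x` and the `k`-th shift of `z` on the first `n` coordinates. -/
def ham (z : Sig) (n : ℕ) (x : Sig) (k : ℤ) : ℕ :=
  ∑ i ∈ Finset.range n, if x (i : ℤ) ≠ z ((i : ℤ) + k) then 1 else 0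

lemma exists_K (z : Sig) (n : ℕ) :
    ∃ K : Sig → ℤ, Measurable K ∧ ∀ x k, ham z n x (K x) ≤ ham z n x k := by
  let F : (Fin n → Bool) → ℤ → ℕ := fun w k =>
    ∑ i : Fin n, if w i ≠ z (((i : ℕ) : ℤ) + k) then 1 else 0
  let r : Sig → (Fin n → Bool) := fun x i => x ((i : ℕ) : ℤ)
  have hF : ∀ x k, ham z n x k = F (r x) k := by
    intro x k
    simp only [ham, F, r]
    rw [Finset.sum_range]
  have hr : Measurable r := measurable_pi_lambda _ fun i => measurable_pi_apply _
  refine ⟨fun x => Function.argmin (F (r x)), ?_, ?_⟩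
  · exact (Measurable.of_discrete (f := fun w => Function.argmin (F w))).comp hr
  · intro x k
    rw [hF, hF]
    exact Function.argmin_le _ _

lemma birk_le {z : Sig} {φ : Bool → ℤ → ℝ} {C δ : ℝ} (hC : ∀ a i, |φ a i| ≤ C) (hδ : 0 < δ)
    (hgap : ∀ i : ℤ, φ (!(z i)) i + δ ≤ φ (z i) i) (n : ℕ) (K : Sig → ℤ)
    (hK : ∀ x k, ham z n x (K x) ≤ ham z n x k) (x : Sig) :
    birk φ n x ≤ (⨆ y : Sig, birk φ n y) - δ * ham z n x (K x) := by
  refine ciSup_le fun k => ?_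
  have h1 : ∑ i ∈ Finset.range n, φ (x (i : ℤ)) ((i : ℤ) + k) ≤
      ∑ i ∈ Finset.range n, φ (z ((i : ℤ) + k)) ((i : ℤ) + k) - δ * ham z n x k := by
    rw [ham]
    push_cast
    rw [Finset.mul_sum, ← Finset.sum_sub_distrib]
    refine Finset.sum_le_sum fun i _ => ?_
    split_ifs with h
    · have h2 : x (i : ℤ) = !(z ((i : ℤ) + k)) := by
        revert h
        cases x (i : ℤ) <;> cases z ((i : ℤ) + k) <;> simp
      rw [h2]
      have := hgap ((i : ℤ) + k)
      linarith
    · push Not at h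
      rw [h]
      simp
  have h2 : ∑ i ∈ Finset.range n, φ (z ((i : ℤ) + k)) ((i : ℤ) + k) ≤ ⨆ y : Sig, birk φ n y :=
    (le_ciSup (birk_bdd hC n (fun j => z (j + k))) k).trans
      (le_ciSup (supbirk_bdd hC n) (fun j => z (j + k)))
  have h3 : (ham z n x (K x) : ℝ) ≤ ham z n x k := by exact_mod_cast hK x k
  nlinarith

/-- The `i`-th point of the orbit of `(x, σ^{K x} z)`. -/
def G (z : Sig) (K : Sig → ℤ) (i : ℕ) (x : Sig) : Sig × Sig :=
  (fun j => x (j + i), fun j => z (j + (K x + i)))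

lemma G_meas (z : Sig) {K : Sig → ℤ} (hK : Measurable K) (i : ℕ) : Measurable (G z K i) := by
  refine Measurable.prodMk ?_ ?_
  · exact measurable_pi_lambda _ fun j => measurable_pi_apply _
  · exact (Measurable.of_discrete (f := fun k : ℤ => (fun j => z (j + (k + i)) : Sig))).comp hK

lemma shift_G (z : Sig) (K : Sig → ℤ) (i : ℕ) (x : Sig) :
    Prod.map shift shift (G z K i x) = G z K (i + 1) x := by
  refine Prod.ext ?_ ?_
  · funext j
    simp only [G, shift, Prod.map]
    push_cast
    congr 1
    ring
  · funext j
    simp only [G, shift, Prod.map]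
    push_cast
    congr 1
    ring

/-- The averaged empirical joining. -/
def avg (z : Sig) (μ : Measure Sig) (K : Sig → ℤ) (n : ℕ) : Measure (Sig × Sig) :=
  ((n : ℝ≥0∞) + 1)⁻¹ • ∑ i ∈ Finset.range (n + 1), μ.map (G z K i)

lemma avg_apply (z : Sig) (μ : Measure Sig) {K : Sig → ℤ} (hK : Measurable K) (n : ℕ)
    {A : Set (Sig × Sig)} (hA : MeasurableSet A) :
    avg z μ K n A =
      ((n : ℝ≥0∞) + 1)⁻¹ * ∑ i ∈ Finset.range (n + 1), μ (G z K i ⁻¹' A) := by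
  rw [avg, Measure.smul_apply, Measure.finset_sum_apply, smul_eq_mul]
  congr 1
  exact Finset.sum_congr rfl fun i _ => Measure.map_apply (G_meas z hK i) hA

lemma avg_const (n : ℕ) (c : ℝ≥0∞) :
    ((n : ℝ≥0∞) + 1)⁻¹ * ∑ _i ∈ Finset.range (n + 1), c = c := by
  rw [Finset.sum_const, Finset.card_range, nsmul_eq_mul, ← mul_assoc]
  push_cast
  rw [ENNReal.inv_mul_cancel (by positivity) (by finiteness), one_mul]

lemma avg_prob (z : Sig) (μ : Measure Sig) [IsProbabilityMeasure μ] {K : Sig → ℤ}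
    (hK : Measurable K) (n : ℕ) : IsProbabilityMeasure (avg z μ K n) := by
  constructor
  rw [avg_apply z μ hK n MeasurableSet.univ]
  simp only [Set.preimage_univ, measure_univ]
  exact avg_const n 1

lemma shift_iter (i : ℕ) (x : Sig) : shift^[i] x = fun j => x (j + i) := by
  induction i generalizing x with
  | zero => simp
  | succ i ih =>
    rw [Function.iterate_succ_apply, ih]
    funext j
    simp only [shift]
    push_cast
    congr 1
    ring

lemma avg_fst (z : Sig) (μ : Measure Sig) {K : Sig → ℤ} (hK : Measurable K)
    (hμ : MeasurePreserving shift μ μ) (n : ℕ) : (avg z μ K n).map Prod.fst = μ := by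
  ext B hB
  rw [Measure.map_apply measurable_fst hB, avg_apply z μ hK n (measurable_fst hB)]
  have : ∀ i ∈ Finset.range (n + 1), μ (G z K i ⁻¹' (Prod.fst ⁻¹' B)) = μ B := by
    intro i _
    rw [← (hμ.iterate i).measure_preimage hB.nullMeasurableSet]
    congr 1
    ext x
    simp [G, shift_iter]
  rw [Finset.sum_congr rfl this, avg_const]

lemma avg_snd (z : Sig) (μ : Measure Sig) [IsProbabilityMeasure μ] {K : Sig → ℤ}
    (hK : Measurable K) (n : ℕ) {Z : Set Sig} (hZ : MeasurableSet Z)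
    (hz : ∀ k : ℤ, (fun j => z (j + k) : Sig) ∈ Z) : avg z μ K n (Prod.snd ⁻¹' Z) = 1 := by
  rw [avg_apply z μ hK n (measurable_snd hZ)]
  have : ∀ i ∈ Finset.range (n + 1), μ (G z K i ⁻¹' (Prod.snd ⁻¹' Z)) = 1 := by
    intro i _
    have : (G z K i ⁻¹' (Prod.snd ⁻¹' Z)) = Set.univ := by
      ext x
      simp [G, hz]
    rw [this, measure_univ]
  rw [Finset.sum_congr rfl this, avg_const]

lemma avg_integral (z : Sig) (μ : Measure Sig) [IsProbabilityMeasure μ] {K : Sig → ℤ}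
    (hK : Measurable K) (n : ℕ) (f : BoundedContinuousFunction (Sig × Sig) ℝ) :
    ∫ p, f p ∂(avg z μ K n) =
      ((n : ℝ) + 1)⁻¹ * ∑ i ∈ Finset.range (n + 1), ∫ x, f (G z K i x) ∂μ := by
  rw [avg, integral_smul_measure, integral_finset_sum_measure]
  · congr 1
    · rw [ENNReal.toReal_inv, ENNReal.toReal_add (by finiteness) (by finiteness)]
      simp
    · refine Finset.sum_congr rfl fun i _ => ?_
      exact integral_map (G_meas z hK i).aemeasurable f.continuous.measurable.aestronglyMeasurable
  · intro i _
    haveI := Measure.isProbabilityMeasure_map (μ := μ) (G_meas z hK i).aemeasurable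
    exact f.integrable _

lemma shift_cont : Continuous shift := by
  unfold shift
  fun_prop

/-- The diagonal-complement set. -/
def neq0 : Set (Sig × Sig) := {p | p.1 0 ≠ p.2 0}

lemma neq0_clopen : IsClopen neq0 := by
  have : neq0 = (fun p : Sig × Sig => (p.1 0, p.2 0)) ⁻¹' {q : Bool × Bool | q.1 ≠ q.2} := rfl
  rw [this]
  exact (isClopen_discrete _).preimage (by fun_prop)

lemma ham_integral (z : Sig) (μ : Measure Sig) [IsProbabilityMeasure μ] {K : Sig → ℤ}
    (hK : Measurable K) (n : ℕ) :
    Integrable (fun x => (ham z (n + 1) x (K x) : ℝ)) μ ∧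
    ((n : ℝ) + 1)⁻¹ * ∫ x, (ham z (n + 1) x (K x) : ℝ) ∂μ = (avg z μ K n neq0).toReal := by
  have hm : ∀ i, MeasurableSet (G z K i ⁻¹' neq0) := fun i =>
    G_meas z hK i neq0_clopen.isOpen.measurableSet
  have e : (fun x => (ham z (n + 1) x (K x) : ℝ)) = fun x =>
      ∑ i ∈ Finset.range (n + 1), (G z K i ⁻¹' neq0).indicator (fun _ => (1 : ℝ)) x := by
    funext x
    rw [ham]
    push_cast
    refine Finset.sum_congr rfl fun i _ => ?_
    have hmem : x ∈ G z K i ⁻¹' neq0 ↔ x (i : ℤ) ≠ z ((i : ℤ) + K x) := by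
      change x (0 + (i : ℤ)) ≠ z (0 + (K x + i)) ↔ _
      rw [zero_add, zero_add, add_comm (K x)]
    by_cases h : x (i : ℤ) ≠ z ((i : ℤ) + K x)
    · rw [if_pos h, Set.indicator_of_mem (hmem.2 h)]
    · rw [if_neg h, Set.indicator_of_notMem (fun h' => h (hmem.1 h'))]
  have hi : ∀ i ∈ Finset.range (n + 1),
      Integrable ((G z K i ⁻¹' neq0).indicator (fun _ => (1 : ℝ))) μ := fun i _ =>
    (integrable_const 1).indicator (hm i)
  rw [e]
  refine ⟨integrable_finset_sum _ hi, ?_⟩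
  rw [integral_finset_sum _ hi, avg_apply z μ hK n neq0_clopen.isOpen.measurableSet,
    ENNReal.toReal_mul, ENNReal.toReal_sum (fun i _ => measure_ne_top _ _), ENNReal.toReal_inv,
    ENNReal.toReal_add (by finiteness) (by finiteness)]
  have hs : ∀ i ∈ Finset.range (n + 1),
      ∫ x, (G z K i ⁻¹' neq0).indicator (fun _ => (1 : ℝ)) x ∂μ = (μ (G z K i ⁻¹' neq0)).toReal := by
    intro i _
    rw [integral_indicator_const _ (hm i)]
    simp [Measure.real]
  rw [Finset.sum_congr rfl hs]
  simp

lemma Lam_le {z : Sig} {φ : Bool → ℤ → ℝ} {C δ : ℝ} (hC : ∀ a i, |φ a i| ≤ C) (hδ : 0 < δ)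
    (hgap : ∀ i : ℤ, φ (!(z i)) i + δ ≤ φ (z i) i) (μ : Measure Sig) [IsProbabilityMeasure μ]
    (n : ℕ) {K : Sig → ℤ} (hKm : Measurable K)
    (hK : ∀ x k, ham z (n + 1) x (K x) ≤ ham z (n + 1) x k) :
    Lam φ μ ≤ (⨆ y : Sig, birk φ (n + 1) y) / ((n + 1 : ℕ) : ℝ)
      - δ * (avg z μ K n neq0).toReal := by
  have hint : ∀ n, Integrable (birk φ n) μ := fun n =>
    Integrable.of_bound (birk_meas φ n).aestronglyMeasurable (n * C)
      (Eventually.of_forall fun x => by simpa using birk_abs_le hC n x)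
  have hb : BddBelow (Set.range fun n : ℕ => ((n : ℝ) + 1)⁻¹ * ∫ x, birk φ (n + 1) x ∂μ) := by
    refine ⟨-C, ?_⟩
    rintro _ ⟨n, rfl⟩
    have h1 : ∫ _x, -(((n + 1 : ℕ) : ℝ) * C) ∂μ ≤ ∫ x, birk φ (n + 1) x ∂μ :=
      integral_mono (integrable_const _) (hint _) fun x => (abs_le.1 (birk_abs_le hC (n + 1) x)).1
    simp only [integral_const, probReal_univ, one_smul] at h1
    push_cast at h1
    have hn : (0 : ℝ) < (n : ℝ) + 1 := by positivity
    simp only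
    rw [← div_eq_inv_mul, le_div_iff₀ hn]
    linarith
  obtain ⟨hi, he⟩ := ham_integral z μ hKm n
  refine (ciInf_le hb n).trans ?_
  have h2 : ∫ x, birk φ (n + 1) x ∂μ ≤
      ∫ x, ((⨆ y : Sig, birk φ (n + 1) y) - δ * ham z (n + 1) x (K x)) ∂μ :=
    integral_mono (hint _) ((integrable_const _).sub (hi.const_mul δ))
      fun x => birk_le hC hδ hgap (n + 1) K hK x
  rw [integral_sub (integrable_const _) (hi.const_mul δ), integral_const_mul] at h2
  simp only [integral_const, probReal_univ, one_smul] at h2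
  rw [← he]
  push_cast
  have hn : (0 : ℝ) ≤ ((n : ℝ) + 1)⁻¹ := by positivity
  refine (mul_le_mul_of_nonneg_left h2 hn).trans (le_of_eq ?_)
  rw [div_eq_inv_mul]
  ring

lemma avg_almost_inv (z : Sig) (μ : Measure Sig) [IsProbabilityMeasure μ] {K : Sig → ℤ}
    (hK : Measurable K) (n : ℕ) (f g : BoundedContinuousFunction (Sig × Sig) ℝ)
    (hg : ∀ p, g p = f (Prod.map shift shift p)) :
    |∫ p, g p ∂(avg z μ K n) - ∫ p, f p ∂(avg z μ K n)| ≤ ((n : ℝ) + 1)⁻¹ * (2 * ‖f‖) := by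
  rw [avg_integral z μ hK, avg_integral z μ hK, ← mul_sub, ← Finset.sum_sub_distrib]
  simp only [hg, shift_G]
  rw [Finset.sum_range_sub (fun i => ∫ x, f (G z K i x) ∂μ), abs_mul,
    abs_of_nonneg (by positivity : (0 : ℝ) ≤ ((n : ℝ) + 1)⁻¹)]
  have h : ∀ i, |∫ x, f (G z K i x) ∂μ| ≤ ‖f‖ := by
    intro i
    have := norm_integral_le_of_norm_le_const (μ := μ) (f := fun x => f (G z K i x)) (C := ‖f‖)
      (Eventually.of_forall fun x => f.norm_coe_le_norm _)
    simpa using this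
  gcongr
  refine (abs_sub _ _).trans ?_
  linarith [h 0, h (n + 1)]

end aux

theorem Lam_le_logSpr_sub_dbar
    (Z : Set Sig) (hZne : Z.Nonempty) (hZcpt : IsCompact Z) (hZinv : shift '' Z = Z)
    (z : Sig) (hz : z ∈ Z)
    (hdense : closure (Set.range fun n : ℤ => (fun j => z (j + n) : Sig)) = Z)
    (φ : Bool → ℤ → ℝ) (hφ : ∃ C : ℝ, ∀ (a : Bool) (i : ℤ), |φ a i| ≤ C)
    (δ : ℝ) (hδ : 0 < δ)
    (hgap : ∀ i : ℤ, φ (!(z i)) i + δ ≤ φ (z i) i)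
    (μ : Measure Sig) (hprob : IsProbabilityMeasure μ) (herg : Ergodic shift μ) :
    Lam φ μ ≤ logSpr φ - δ * sInf {r : ℝ | ∃ ν : Measure Sig,
      IsProbabilityMeasure ν ∧ ν.map shift = ν ∧ ν Z = 1 ∧ r = dbar μ ν} := by
  obtain ⟨C, hC⟩ := hφ
  have hmp : MeasurePreserving shift μ μ := herg.toMeasurePreserving
  have hzk : ∀ k : ℤ, (fun j => z (j + k) : Sig) ∈ Z := fun k => by
    rw [← hdense]
    exact subset_closure ⟨k, rfl⟩
  have hZcl : IsClosed Z := hZcpt.isClosed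
  choose K hKm hK using fun n : ℕ => exists_K z (n + 1)
  obtain ⟨l, hl, htl⟩ := supbirk_tendsto hC
  let M : ℕ → ProbabilityMeasure (Sig × Sig) := fun n => ⟨avg z μ (K n) n, avg_prob z μ (hKm n) n⟩
  let U : Ultrafilter ℕ := hyperfilter ℕ
  have hU : (U : Filter ℕ) ≤ atTop := Nat.hyperfilter_le_atTop
  obtain ⟨m, hm⟩ : ∃ m, Tendsto M U (nhds m) := by
    obtain ⟨m, -, hm⟩ := isCompact_univ.ultrafilter_le_nhds (U.map M) (by simp)
    exact ⟨m, hm⟩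
  have htc : Continuous (Prod.map shift shift) := shift_cont.prodMap shift_cont
  -- first marginal
  have hfst : (m : Measure (Sig × Sig)).map Prod.fst = μ := by
    have h1 := ((ProbabilityMeasure.continuous_map (Ω := Sig × Sig) continuous_fst).tendsto m).comp hm
    have h2 : ∀ n, (M n).map (continuous_fst (X := Sig) (Y := Sig)).measurable.aemeasurable
        = ⟨μ, hprob⟩ := by
      intro n
      apply Subtype.ext
      exact avg_fst z μ (hKm n) hmp n
    have h3 := tendsto_nhds_unique (h1.congr h2) tendsto_const_nhds
    exact congrArg (fun p : ProbabilityMeasure Sig => (p : Measure Sig)) h3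
  -- invariance
  have hinv : (m : Measure (Sig × Sig)).map (Prod.map shift shift) = m := by
    haveI := Measure.isProbabilityMeasure_map (μ := (m : Measure (Sig × Sig)))
      htc.measurable.aemeasurable
    refine ext_of_forall_integral_eq_of_IsFiniteMeasure fun f => ?_
    rw [integral_map htc.measurable.aemeasurable f.continuous.measurable.aestronglyMeasurable]
    let g := f.compContinuous ⟨_, htc⟩
    have hg : ∀ p, g p = f (Prod.map shift shift p) := fun p => rfl
    have hI := ProbabilityMeasure.tendsto_iff_forall_integral_tendsto.1 hm
    have h1 := ((hI g).sub (hI f)).abs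
    have h2 : Tendsto (fun n : ℕ => ((n : ℝ) + 1)⁻¹ * (2 * ‖f‖)) U (nhds 0) := by
      have := (tendsto_one_div_add_atTop_nhds_zero_nat (𝕜 := ℝ)).mul_const (2 * ‖f‖)
      simp only [one_div, zero_mul] at this
      exact this.mono_left hU
    have h3 := le_of_tendsto_of_tendsto' h1 h2
      (fun n => avg_almost_inv z μ (hKm n) n f g hg)
    have h4 := abs_nonpos_iff.1 h3
    exact sub_eq_zero.1 h4
  -- second marginal
  set ν := (m : Measure (Sig × Sig)).map Prod.snd with hν
  have hνp : IsProbabilityMeasure ν := Measure.isProbabilityMeasure_map measurable_snd.aemeasurable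
  have hνinv : ν.map shift = ν := by
    rw [hν, Measure.map_map shift_cont.measurable measurable_snd]
    conv_rhs => rw [← hinv, Measure.map_map measurable_snd htc.measurable]
    rfl
  have hνZ : ν Z = 1 := by
    refine le_antisymm prob_le_one ?_
    rw [hν, Measure.map_apply measurable_snd hZcl.measurableSet]
    have h1 := ProbabilityMeasure.limsup_measure_closed_le_of_tendsto hm
      (hZcl.preimage (continuous_snd (X := Sig) (Y := Sig)))
    have h2 : ∀ n, (M n : Measure (Sig × Sig)) (Prod.snd ⁻¹' Z) = 1 := fun n =>
      avg_snd z μ (hKm n) n hZcl.measurableSet hzk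
    simpa [h2] using h1
  -- the limit inequality
  have hneq : Tendsto (fun n => ((M n : Measure (Sig × Sig)) neq0).toReal) U
      (nhds ((m : Measure (Sig × Sig)) neq0).toReal) := by
    refine (ENNReal.tendsto_toReal (measure_ne_top _ _)).comp ?_
    exact ProbabilityMeasure.tendsto_measure_of_null_frontier_of_tendsto' hm
      (by simp [neq0_clopen.frontier_eq])
  have hkey : Lam φ μ ≤ l - δ * ((m : Measure (Sig × Sig)) neq0).toReal := by
    refine ge_of_tendsto' ((((tendsto_add_atTop_iff_nat 1).2 htl).mono_left hU).sub
      (hneq.const_mul δ)) fun n => ?_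
    exact Lam_le hC hδ hgap μ n (hKm n) (hK n)
  have hd : dbar μ ν ≤ ((m : Measure (Sig × Sig)) neq0).toReal := by
    refine csInf_le ⟨0, ?_⟩ ⟨m, inferInstance, hinv, hfst, rfl, rfl⟩
    rintro _ ⟨m', -, -, -, -, rfl⟩
    exact ENNReal.toReal_nonneg
  have hs : sInf {r : ℝ | ∃ ν : Measure Sig,
      IsProbabilityMeasure ν ∧ ν.map shift = ν ∧ ν Z = 1 ∧ r = dbar μ ν} ≤ dbar μ ν := by
    refine csInf_le ⟨0, ?_⟩ ⟨ν, hνp, hνinv, hνZ, rfl⟩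
    rintro _ ⟨ν', -, -, -, rfl⟩
    refine Real.sInf_nonneg ?_
    rintro _ ⟨m', -, -, -, -, rfl⟩
    exact ENNReal.toReal_nonneg
  have := mul_le_mul_of_nonneg_left (hs.trans hd) hδ.le
  linarith
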